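/- Let G be a 2-connected graph containing two vertex-disjoint 2-edge-connected subgraphs C1 and C2, a path P joining them edge-disjoint from both, and a vertex v ∉ V(C1) ∪ V(C2) joined by single edges to at least four distinct vertices in C1 and at least four distinct vertices in C2. Then G contains an immersion of K_{3,3}. -/

import Mathlib

/-- A finite multigraph without loops: vertices `V`, edges `E`,
each edge has an unordered pair of distinct endpoints. -/
structure Multigraph where
  V : Type
  E : Type
  [fV : Fintype V]
  [fE : Fintype E]
  [dV : DecidableEq V]
  [dE : DecidableEq E]
  ends : E → Sym2 V
  noLoop : ∀ e, ¬ (ends e).IsDiag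

attribute [instance] Multigraph.fV Multigraph.fE Multigraph.dV Multigraph.dE

namespace Multigraph

/-- Walks in a multigraph. -/
inductive Walk (G : Multigraph) : G.V → G.V → Type
  | nil (v : G.V) : Walk G v v
  | cons {u v w : G.V} (e : G.E) (h : G.ends e = s(u, v)) (p : Walk G v w) : Walk G u w

/-- The list of edges traversed by a walk. -/
def Walk.edges {G : Multigraph} : {u v : G.V} → G.Walk u v → List G.E
  | _, _, .nil _ => []
  | _, _, .cons e _ p => e :: p.edges

/-- The list of vertices visited by a walk. -/
def Walk.support {G : Multigraph} : {u v : G.V} → G.Walk u v → List G.V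
  | u, _, .nil _ => [u]
  | u, _, .cons _ _ p => u :: p.support

/-- A walk is a path if it visits no vertex twice. -/
def Walk.IsPath {G : Multigraph} {u v : G.V} (p : G.Walk u v) : Prop := p.support.Nodup

/-- Data of an immersion of `H` into `G`: an injective map on vertices and,
for each edge of `H`, a path in `G` joining the images of its endpoints,
the paths being pairwise edge-disjoint. -/
structure ImmersionData (H G : Multigraph) where
  vmap : H.V → G.V
  inj : Function.Injective vmap
  pstart : H.E → G.V
  pend : H.E → G.V
  walk : ∀ e, G.Walk (pstart e) (pend e)
  ends_eq : ∀ e, s(pstart e, pend e) = (H.ends e).map vmap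
  isPath : ∀ e, (walk e).IsPath
  edgeDisj : ∀ e e', e ≠ e' → List.Disjoint (walk e).edges (walk e').edges

/-- `H` immerses in `G`. -/
def Immerses (H G : Multigraph) : Prop := Nonempty (ImmersionData H G)

/-- Data witnessing that `G` contains a subdivision of `H` as a subgraph
(i.e. `H` is a topological minor of `G`): as an immersion, but moreover the
paths may only meet at images of common endpoints. -/
structure SubdivisionData (H G : Multigraph) extends ImmersionData H G where
  vtxDisj : ∀ e e', e ≠ e' → ∀ x, x ∈ (walk e).support → x ∈ (walk e').support →
    ∃ w, x = vmap w ∧ w ∈ H.ends e ∧ w ∈ H.ends e'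

/-- `G` contains a subdivision of `H` as a subgraph. -/
def ContainsSubdivision (H G : Multigraph) : Prop := Nonempty (SubdivisionData H G)

/-- The complete bipartite graph `K_{3,3}`. -/
def K33 : Multigraph where
  V := Fin 3 ⊕ Fin 3
  E := Fin 3 × Fin 3
  ends e := s(Sum.inl e.1, Sum.inr e.2)
  noLoop e := by simp [Sym2.mk_isDiag_iff]

/-- The complete graph `K_5`. -/
def K5 : Multigraph where
  V := Fin 5
  E := {p : Fin 5 × Fin 5 // p.1 < p.2}
  ends e := s(e.1.1, e.1.2)
  noLoop e := by simpa [Sym2.mk_isDiag_iff] using e.2.ne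

variable (G : Multigraph)

/-- The degree of a vertex: the number of incident edges. -/
def deg (v : G.V) : ℕ := (Finset.univ.filter fun e => v ∈ G.ends e).card

/-- The multiplicity of the (possible) edge between `u` and `v`. -/
def mult (u v : G.V) : ℕ := (Finset.univ.filter fun e => G.ends e = s(u, v)).card

/-- The edge cut determined by a set `A` of vertices. -/
def cut (A : Finset G.V) : Finset G.E :=
  Finset.univ.filter fun e => ∃ u ∈ A, ∃ v ∈ Aᶜ, G.ends e = s(u, v)

/-- Every edge cut of `G` has at least `k` edges. -/
def EdgeConnGe (k : ℕ) : Prop :=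
  ∀ A : Finset G.V, A.Nonempty → A ≠ Finset.univ → k ≤ (G.cut A).card

/-- Internally 4-edge-connected: 3-edge-connected and every 3-edge cut has a
side consisting of a single vertex. -/
def Internally4EC : Prop :=
  G.EdgeConnGe 3 ∧ ∀ A : Finset G.V, A.Nonempty → A ≠ Finset.univ →
    (G.cut A).card = 3 → A.card = 1 ∨ Aᶜ.card = 1

/-- Weakly 5-edge-connected: internally 4-edge-connected and every 4-edge cut
has a side with at most two vertices. -/
def Weakly5EC : Prop :=
  G.Internally4EC ∧ ∀ A : Finset G.V, A.Nonempty → A ≠ Finset.univ →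
    (G.cut A).card = 4 → A.card ≤ 2 ∨ Aᶜ.card ≤ 2

/-- `G` is `d`-regular. -/
def IsRegular (d : ℕ) : Prop := ∀ v, G.deg v = d

/-- `G` is connected. -/
def Connected : Prop := ∀ u v : G.V, Nonempty (G.Walk u v)

/-- `v` is a cut-vertex: the remaining vertices split into two nonempty parts
with no edge between them. -/
def IsCutVertex (v : G.V) : Prop :=
  ∃ C D : Finset G.V, C.Nonempty ∧ D.Nonempty ∧ Disjoint C D ∧ v ∉ C ∧ v ∉ D ∧
    (∀ x : G.V, x ∈ C ∪ D ∨ x = v) ∧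
    ∀ e : G.E, ¬ ∃ u ∈ C, ∃ w ∈ D, G.ends e = s(u, w)

/-- `G` is 2-connected. -/
def TwoConnected : Prop :=
  G.Connected ∧ 3 ≤ Fintype.card G.V ∧ ∀ v, ¬ G.IsCutVertex v

/-- Planarity, via Kuratowski's characterization: no subdivision of `K_5`
nor of `K_{3,3}` as a subgraph. -/
def Planar : Prop := ¬ ContainsSubdivision K5 G ∧ ¬ ContainsSubdivision K33 G

end Multigraph

namespace Multigraph

/-- The subgraph with vertex set `S` and edge set `F` is 2-edge-connected:
all edges of `F` have both ends in `S`, it is connected, and removing any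
single edge of `F` leaves it connected. -/
def TwoEdgeConnOn (G : Multigraph) (S : Finset G.V) (F : Finset G.E) : Prop :=
  S.Nonempty ∧ (∀ e ∈ F, ∀ x ∈ G.ends e, x ∈ S) ∧
  (∀ x ∈ S, ∀ y ∈ S, ∃ p : G.Walk x y, ∀ e ∈ p.edges, e ∈ F) ∧
  ∀ e0 ∈ F, ∀ x ∈ S, ∀ y ∈ S, ∃ p : G.Walk x y, ∀ e ∈ p.edges, e ∈ F ∧ e ≠ e0

end Multigraph

/-!
An immersion only asks for edge-disjoint paths, so the whole argument runs on edge-disjoint trails.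
In a 2-edge-connected subgraph every vertex has two edge-disjoint trails (ears) to a prescribed
set of vertices. Splicing ears into a trail, one vertex at a time, gives a trail from any vertex
through any three others.

As `v` is not a cut-vertex, some path `Q` avoiding `v` leads from a vertex `p` of `C₁` to a vertex
`p₂` of `C₂`. In `C₂` take a trail from `p₂` through neighbours `b₁`, `b₂`, `b₃` of `v`, in this
order, and in `C₁` a trail through neighbours `a₁`, `a₂`, `a₃`, `a₄` of `v`. Two ears from `p` to
the latter either reroute its middle segment through `p`, or one of them ends at a vertex `q` of an
outer segment, say between `a₁` and `a₂`. Together with the edges at `v` this is an immersion of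
`K_{3,3}` with sides `v, p, b₂ | a₂, a₃, b₁` in the first case and `v, a₂, b₁ | a₃, q, b₂` in the
second.
-/

namespace Multigraph

/-! ### Walks -/

namespace Walk

variable {G : Multigraph} {u v w x : G.V}

/-- Concatenation of walks. -/
def append : {u v w : G.V} → G.Walk u v → G.Walk v w → G.Walk u w
  | _, _, _, .nil _, q => q
  | _, _, _, .cons e h p, q => .cons e h (p.append q)

/-- The walk traversed backwards. -/
def reverse : {u v : G.V} → G.Walk u v → G.Walk v u
  | _, _, .nil v => .nil v
  | _, _, .cons e h p => p.reverse.append (.cons e (h.trans Sym2.eq_swap) (.nil _))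

/-- The edges of a walk, with multiplicity. Edge-disjointness is expressed additively: for an edge
set `F`, `A.edgeMultiset + B.edgeMultiset ≤ F.val` says that `A` and `B` are edge-disjoint trails
with all their edges in `F`. -/
def edgeMultiset (p : G.Walk u v) : Multiset G.E := p.edges

@[simp] theorem edgeMultiset_nil : (nil u : G.Walk u u).edgeMultiset = 0 := rfl

@[simp] theorem edgeMultiset_cons (e : G.E) (h : G.ends e = s(u, v)) (p : G.Walk v w) :
    (cons e h p).edgeMultiset = {e} + p.edgeMultiset := rfl

@[simp] theorem edgeMultiset_append (p : G.Walk u v) (q : G.Walk v w) :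
    (p.append q).edgeMultiset = p.edgeMultiset + q.edgeMultiset := by
  induction p with
  | nil => simp [append]
  | cons e h p ih => simp [append, ih]

@[simp] theorem edgeMultiset_reverse (p : G.Walk u v) :
    p.reverse.edgeMultiset = p.edgeMultiset := by
  induction p with
  | nil => rfl
  | cons e h p ih => simp [reverse, ih, add_comm]

theorem mem_edgeMultiset {e : G.E} {p : G.Walk u v} : e ∈ p.edgeMultiset ↔ e ∈ p.edges := Iff.rfl

@[simp] theorem start_mem_support (p : G.Walk u v) : u ∈ p.support := by
  cases p <;> simp [support]

@[simp] theorem end_mem_support (p : G.Walk u v) : v ∈ p.support := by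
  induction p <;> simp [support, *]

@[simp] theorem mem_support_append {p : G.Walk u v} {q : G.Walk v w} :
    x ∈ (p.append q).support ↔ x ∈ p.support ∨ x ∈ q.support := by
  induction p with
  | nil =>
    simp only [append, support, List.mem_singleton, iff_or_self]
    rintro rfl
    exact q.start_mem_support
  | cons e h p ih => simp [append, support, ih, or_assoc]

@[simp] theorem mem_support_reverse {p : G.Walk u v} :
    x ∈ p.reverse.support ↔ x ∈ p.support := by
  induction p with
  | nil => rfl
  | @cons u v w e h p ih =>
    have := p.start_mem_support
    simp only [reverse, mem_support_append, ih, support, List.mem_cons, List.not_mem_nil]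
    grind

theorem exists_append_of_mem_support (p : G.Walk u v) (hx : x ∈ p.support) :
    ∃ (q : G.Walk u x) (r : G.Walk x v), p = q.append r := by
  induction p with
  | nil u =>
    obtain rfl : x = u := by simpa [support] using hx
    exact ⟨.nil x, .nil x, rfl⟩
  | @cons u v w e h p ih =>
    by_cases hxu : x = u
    · subst hxu
      exact ⟨.nil x, .cons e h p, rfl⟩
    · obtain ⟨q, r, rfl⟩ := ih (by simpa [support, hxu] using hx)
      exact ⟨.cons e h q, r, rfl⟩

theorem mem_support_of_mem_edges {p : G.Walk u v} {e : G.E} (he : e ∈ p.edges)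
    (hx : x ∈ G.ends e) : x ∈ p.support := by
  induction p with
  | nil => simp [edges] at he
  | cons f h p ih =>
    have := p.start_mem_support
    simp only [edges, List.mem_cons] at he
    grind [support]

theorem end_mem {S : Finset G.V} {F : Finset G.E} (hF : ∀ e ∈ F, ∀ x ∈ G.ends e, x ∈ S)
    (p : G.Walk u v) (hu : u ∈ S) (hp : ∀ e ∈ p.edges, e ∈ F) : v ∈ S := by
  induction p with
  | nil => exact hu
  | @cons u v w e h p ih =>
    simp only [edges, List.mem_cons, forall_eq_or_imp] at hp
    exact ih (hF e hp.1 v (by simp [h])) hp.2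

theorem IsPath.nodup_edges {p : G.Walk u v} (hp : p.IsPath) : p.edges.Nodup := by
  induction p with
  | nil => simp [edges]
  | cons e h p ih =>
    simp only [IsPath, support, List.nodup_cons] at hp
    refine List.nodup_cons.2 ⟨fun he => hp.1 ?_, ih hp.2⟩
    exact mem_support_of_mem_edges he (by simp [h])

theorem IsPath.of_append_right {p : G.Walk u v} {q : G.Walk v w} (h : (p.append q).IsPath) :
    q.IsPath := by
  induction p with
  | nil => exact h
  | cons e _ p ih => exact ih (List.nodup_cons.1 h).2

theorem exists_isPath (p : G.Walk u v) :
    ∃ q : G.Walk u v, q.IsPath ∧ ∀ e ∈ q.edges, e ∈ p.edges := by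
  induction p with
  | nil u => exact ⟨.nil u, by simp [IsPath, support], by simp⟩
  | @cons u v w e h p ih =>
    obtain ⟨q, hq, hqp⟩ := ih
    by_cases hu : u ∈ q.support
    · obtain ⟨a, b, rfl⟩ := q.exists_append_of_mem_support hu
      refine ⟨b, hq.of_append_right, fun f hf => List.mem_cons_of_mem _ (hqp f ?_)⟩
      simp only [← mem_edgeMultiset, edgeMultiset_append] at hf ⊢
      exact Multiset.mem_add.2 (.inr hf)
    · exact ⟨.cons e h q, List.nodup_cons.2 ⟨hu, hq⟩, by grind [edges]⟩

theorem exists_first_hit (p : G.Walk u v) {X : Set G.V} (hX : ∃ x ∈ X, x ∈ p.support) :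
    ∃ r ∈ X, ∃ (q : G.Walk u r) (q' : G.Walk r v), p = q.append q' ∧
      (∀ e ∈ q.edges, ∃ x ∈ G.ends e, x ∉ X) ∧ ∀ x ∈ X, x ∈ p.support → x ∈ q'.support := by
  induction p with
  | nil u => exact ⟨u, by simpa [support] using hX, .nil u, .nil u, rfl, by simp [edges]⟩
  | @cons u v w e h p ih =>
    by_cases hu : u ∈ X
    · exact ⟨u, hu, .nil u, .cons e h p, rfl, by simp [edges]⟩
    · have hsupp {x : G.V} (hx : x ∈ X) (hxp : x ∈ (cons e h p).support) : x ∈ p.support :=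
        (List.mem_cons.1 hxp).resolve_left fun hxu => hu (hxu ▸ hx)
      obtain ⟨x, hx, hxp⟩ := hX
      obtain ⟨r, hr, q, q', rfl, hq, hq'⟩ := ih ⟨x, hx, hsupp hx hxp⟩
      refine ⟨r, hr, .cons e h q, q', rfl, ?_, fun x hx hxp => hq' x hx (hsupp hx hxp)⟩
      simp only [edges, List.mem_cons, forall_eq_or_imp]
      exact ⟨⟨u, by simp [h], hu⟩, hq⟩

/-- The one-edge walk along `e`. -/
def single (e : G.E) (h : G.ends e = s(u, v)) : G.Walk u v := .cons e h (.nil v)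

@[simp] theorem edgeMultiset_single (e : G.E) (h : G.ends e = s(u, v)) :
    (single e h).edgeMultiset = {e} := rfl

end Walk

open Walk

-- `≤` between multisets of edges is checked edge by edge, on multiplicities.
attribute [local grind =] Multiset.le_iff_count Multiset.count_add edgeMultiset_nil
  edgeMultiset_cons edgeMultiset_append edgeMultiset_reverse edgeMultiset_single
  mem_support_append mem_support_reverse

attribute [local grind .] start_mem_support end_mem_support

/-! ### Ears -/

section Ears

variable {G : Multigraph} {S : Finset G.V} {F : Finset G.E} {u v c : G.V}

theorem add_le_val_of_disjoint {α : Type*} {F : Finset α} {A B : Multiset α}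
    (hA : A ≤ F.val) (hB : B ≤ F.val) (h : Disjoint A B) : A + B ≤ F.val :=
  (Multiset.le_iff_subset (Multiset.nodup_add.2
    ⟨Multiset.nodup_of_le hA F.nodup, Multiset.nodup_of_le hB F.nodup, h⟩)).2 fun _ he =>
    (Multiset.mem_add.1 he).elim (Multiset.mem_of_le hA) (Multiset.mem_of_le hB)

theorem Walk.IsPath.edgeMultiset_le {p : G.Walk u v} (hp : p.IsPath) (hF : ∀ e ∈ p.edges, e ∈ F) :
    p.edgeMultiset ≤ F.val :=
  (Multiset.le_iff_subset (Multiset.coe_nodup.2 hp.nodup_edges)).2 hF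

/-- Two edge-disjoint trails (*ears*) in `F` from `c` to the set `W`, avoiding the edges `X`. -/
def HasEars (F : Finset G.E) (X : Multiset G.E) (W : Set G.V) (c : G.V) : Prop :=
  ∃ z ∈ W, ∃ w ∈ W, ∃ (P : G.Walk c z) (Q : G.Walk c w),
    X + P.edgeMultiset + Q.edgeMultiset ≤ F.val

variable {X : Multiset G.E} {W : Set G.V}

theorem HasEars.of_mem (hX : X ≤ F.val) (hc : c ∈ W) : HasEars F X W c :=
  ⟨c, hc, c, hc, .nil c, .nil c, by simpa using hX⟩

theorem TwoEdgeConnOn.exists_trail_avoiding_edge (hC : G.TwoEdgeConnOn S F) {e : G.E} (heF : e ∈ F)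
    (hce : c ∈ G.ends e) {Y : Set G.V} (hcY : c ∉ Y) {y : G.V} (hyS : y ∈ S) (hyY : y ∈ Y)
    (hX : X ≤ F.val) (hXY : ∀ e ∈ X, ∀ x ∈ G.ends e, x ∈ Y) :
    ∃ r ∈ Y, ∃ R : G.Walk c r, X + ({e} + R.edgeMultiset) ≤ F.val := by
  obtain ⟨p, hp⟩ := hC.2.2.2 e heF c (hC.2.1 e heF c hce) y hyS
  obtain ⟨p', hp', hpp'⟩ := p.exists_isPath
  obtain ⟨r, hr, R, R', rfl, hR, -⟩ := p'.exists_first_hit ⟨y, hyY, p'.end_mem_support⟩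
  have hle : R.edgeMultiset ≤ (R.append R').edgeMultiset := by simp
  have hRp : ∀ f ∈ R.edgeMultiset, f ∈ F ∧ f ≠ e := fun f hf =>
    hp f (hpp' f (Multiset.mem_of_le hle hf))
  have hRF : R.edgeMultiset ≤ F.val :=
    hle.trans (hp'.edgeMultiset_le fun f hf => (hp f (hpp' f hf)).1)
  have heR : {e} + R.edgeMultiset ≤ F.val := by
    refine add_le_val_of_disjoint (by simpa using heF) hRF ?_
    exact Multiset.singleton_disjoint.2 fun h => (hRp e h).2 rfl
  refine ⟨r, hr, R, add_le_val_of_disjoint hX heR (Multiset.disjoint_left.2 fun {f} hfX hf => ?_)⟩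
  obtain ⟨x, hxf, hx⟩ : ∃ x ∈ G.ends f, x ∉ Y := by
    obtain hf | hf := Multiset.mem_add.1 hf
    · rw [Multiset.mem_singleton.1 hf]
      exact ⟨c, hce, hcY⟩
    · exact hR f hf
  exact hx (hXY f hfX x hxf)

theorem HasEars.cons (hC : G.TwoEdgeConnOn S F) (hXW : ∀ e ∈ X, ∀ x ∈ G.ends e, x ∈ W)
    {y : G.V} (hyS : y ∈ S) (hyW : y ∈ W) {c' : G.V} {e : G.E} (he : G.ends e = s(c, c'))
    (heF : e ∈ F) (h : HasEars F X W c') : HasEars F X W c := by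
  obtain ⟨z, hz, w, hw, P, Q, hPQ⟩ := h
  by_cases hcW : c ∈ W
  · exact .of_mem (by grind) hcW
  by_cases hcP : c ∈ P.support
  · obtain ⟨P₁, P₂, rfl⟩ := P.exists_append_of_mem_support hcP
    exact ⟨z, hz, w, hw, P₂, P₁.reverse.append Q, by grind (gen := 20) (ematch := 20)⟩
  by_cases hcQ : c ∈ Q.support
  · obtain ⟨Q₁, Q₂, rfl⟩ := Q.exists_append_of_mem_support hcQ
    exact ⟨z, hz, w, hw, Q₁.reverse.append P, Q₂, by grind (gen := 20) (ematch := 20)⟩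
  obtain ⟨r, hr, R, hR⟩ := hC.exists_trail_avoiding_edge heF (c := c) (by simp [he])
    (Y := W ∪ {x | x ∈ P.support} ∪ {x | x ∈ Q.support}) (by simp [hcW, hcP, hcQ]) hyS
    (.inl (.inl hyW)) hPQ fun f hf x hx => by
      obtain (hf | hf) | hf := by simpa only [Multiset.mem_add] using hf
      · exact .inl (.inl (hXW f hf x hx))
      · exact .inl (.inr (mem_support_of_mem_edges hf hx))
      · exact .inr (mem_support_of_mem_edges hf hx)
  obtain (hr | hr) | hr := hr
  · exact ⟨r, hr, w, hw, R, .cons e he Q, by grind (gen := 20) (ematch := 20)⟩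
  · obtain ⟨P₁, P₂, rfl⟩ := P.exists_append_of_mem_support hr
    exact ⟨z, hz, w, hw, R.append P₂, .cons e he Q, by grind (gen := 20) (ematch := 20)⟩
  · obtain ⟨Q₁, Q₂, rfl⟩ := Q.exists_append_of_mem_support hr
    exact ⟨z, hz, w, hw, .cons e he P, R.append Q₂, by grind (gen := 20) (ematch := 20)⟩

theorem TwoEdgeConnOn.hasEars (hC : G.TwoEdgeConnOn S F) (hX : X ≤ F.val)
    (hXW : ∀ e ∈ X, ∀ x ∈ G.ends e, x ∈ W) {y : G.V} (hyS : y ∈ S) (hyW : y ∈ W) (hc : c ∈ S) :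
    HasEars F X W c := by
  obtain ⟨p, hp⟩ := hC.2.2.1 c hc y hyS
  clear hc
  induction p with
  | nil => exact .of_mem hX hyW
  | cons e he p ih =>
    simp only [edges, List.mem_cons, forall_eq_or_imp] at hp
    exact (ih hyS hyW hp.2).cons hC hXW hyS hyW he hp.1

end Ears

/-! ### Trails through three vertices -/

section Tours

variable {G : Multigraph} {S A : Finset G.V} {F : Finset G.E} {u v x y z w p a b c : G.V}

theorem exists_detour {U : G.Walk u v} {Z : G.Walk c z} {W : G.Walk c w} (hz : z ∈ U.support)
    (hw : w ∈ U.support) : ∃ (V₁ : G.Walk u c) (V₂ : G.Walk c v), V₁.edgeMultiset +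
      V₂.edgeMultiset ≤ U.edgeMultiset + Z.edgeMultiset + W.edgeMultiset := by
  obtain ⟨U₁, U₂, rfl⟩ := U.exists_append_of_mem_support hz
  obtain hw | hw := mem_support_append.1 hw
  · obtain ⟨U₀, U₁, rfl⟩ := U₁.exists_append_of_mem_support hw
    exact ⟨U₀.append W.reverse, Z.append U₂, by grind (gen := 20) (ematch := 20)⟩
  · obtain ⟨U₂, U₃, rfl⟩ := U₂.exists_append_of_mem_support hw
    exact ⟨U₁.append Z.reverse, W.append U₃, by grind (gen := 20) (ematch := 20)⟩

/-- Some trail in `F` starts at `p` and passes through every vertex of `A`. -/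
def TrailThrough (F : Finset G.E) (p : G.V) (A : Set G.V) : Prop :=
  ∃ (w : G.V) (T : G.Walk p w), T.edgeMultiset ≤ F.val ∧ ∀ a ∈ A, a ∈ T.support

theorem TrailThrough.of_closed_trail {U₁ : G.Walk p a} {U₂ : G.Walk a b} {U₃ : G.Walk b p}
    (h : HasEars F (U₁.edgeMultiset + U₂.edgeMultiset + U₃.edgeMultiset)
      {x | x ∈ U₁.support ∨ x ∈ U₂.support ∨ x ∈ U₃.support} c) :
    TrailThrough F p {a, b, c} := by
  obtain ⟨z, hz, w, hw, Z, W, hF⟩ := h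
  -- An ear ending on `U₁` or `U₃` is appended to the tour run in the appropriate direction.
  have attach₁ {z : G.V} (hz : z ∈ U₁.support) (Z : G.Walk c z)
      (hF : U₁.edgeMultiset + U₂.edgeMultiset + U₃.edgeMultiset + Z.edgeMultiset ≤ F.val) :
      TrailThrough F p {a, b, c} := by
    obtain ⟨V₁, V₂, rfl⟩ := U₁.exists_append_of_mem_support hz
    exact ⟨c, U₃.reverse.append (U₂.reverse.append (V₂.reverse.append Z.reverse)),
      by grind (gen := 20) (ematch := 20), by grind⟩
  have attach₃ {z : G.V} (hz : z ∈ U₃.support) (Z : G.Walk c z)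
      (hF : U₁.edgeMultiset + U₂.edgeMultiset + U₃.edgeMultiset + Z.edgeMultiset ≤ F.val) :
      TrailThrough F p {a, b, c} := by
    obtain ⟨V₁, V₂, rfl⟩ := U₃.exists_append_of_mem_support hz
    exact ⟨c, U₁.append (U₂.append (V₁.append Z.reverse)), by grind (gen := 20) (ematch := 20),
      by grind⟩
  obtain hz | hz | hz := hz
  · exact attach₁ hz Z (by grind (gen := 20) (ematch := 20))
  · obtain hw | hw | hw := hw
    · exact attach₁ hw W (by grind (gen := 20) (ematch := 20))
    · obtain ⟨V₁, V₂, hV⟩ := exists_detour hz hw (Z := Z) (W := W)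
      exact ⟨b, U₁.append (V₁.append V₂), by grind (gen := 20) (ematch := 20), by grind⟩
    · exact attach₃ hw W (by grind (gen := 20) (ematch := 20))
  · exact attach₃ hz Z (by grind (gen := 20) (ematch := 20))

section Theta

variable {A₁ : G.Walk p x} {A₂ : G.Walk p y} {B₁ : G.Walk a x} {B₂ : G.Walk a y} {C₁ : G.Walk b x}
  {C₂ : G.Walk b y}

theorem TrailThrough.of_theta_of_mem {Z : G.Walk c z} (hz : z ∈ B₁.support)
    (hF : A₁.edgeMultiset + B₁.edgeMultiset + B₂.edgeMultiset + C₁.edgeMultiset + C₂.edgeMultiset +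
      Z.edgeMultiset ≤ F.val) : TrailThrough F p {a, b, c} := by
  obtain ⟨V₁, V₂, rfl⟩ := B₁.exists_append_of_mem_support hz
  exact ⟨c, A₁.append (C₁.reverse.append (C₂.append (B₂.reverse.append (V₁.append Z.reverse)))),
    by grind (gen := 20) (ematch := 20), by grind⟩

theorem TrailThrough.of_theta_of_mem_of_mem {Z : G.Walk c z} {W : G.Walk c w}
    (hz : z ∈ A₁.support) (hw : w ∈ A₁.support)
    (hF : A₁.edgeMultiset + B₁.edgeMultiset + B₂.edgeMultiset + C₁.edgeMultiset + C₂.edgeMultiset +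
      Z.edgeMultiset + W.edgeMultiset ≤ F.val) : TrailThrough F p {a, b, c} := by
  obtain ⟨V₁, V₂, hV⟩ := exists_detour hz hw (Z := Z) (W := W)
  exact ⟨b, (V₁.append V₂).append (B₁.reverse.append (B₂.append C₂.reverse)),
    by grind (gen := 20) (ematch := 20), by grind⟩

theorem TrailThrough.of_theta_of_mem_of_mem' {Z : G.Walk c z} {W : G.Walk c w}
    (hz : z ∈ A₁.support) (hw : w ∈ A₂.support)
    (hF : A₁.edgeMultiset + A₂.edgeMultiset + B₁.edgeMultiset + B₂.edgeMultiset +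
      C₁.edgeMultiset + Z.edgeMultiset + W.edgeMultiset ≤ F.val) :
    TrailThrough F p {a, b, c} := by
  obtain ⟨V₁, V₂, rfl⟩ := A₁.exists_append_of_mem_support hz
  obtain ⟨U₁, U₂, rfl⟩ := A₂.exists_append_of_mem_support hw
  exact ⟨b, V₁.append (Z.reverse.append (W.append (U₂.append (B₂.reverse.append
    (B₁.append C₁.reverse))))), by grind (gen := 20) (ematch := 20), by grind⟩

theorem TrailThrough.of_theta
    (h : HasEars F (A₁.edgeMultiset + A₂.edgeMultiset + B₁.edgeMultiset + B₂.edgeMultiset +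
        C₁.edgeMultiset + C₂.edgeMultiset)
      {t | (t ∈ A₁.support ∨ t ∈ A₂.support) ∨ (t ∈ B₁.support ∨ t ∈ B₂.support) ∨
        t ∈ C₁.support ∨ t ∈ C₂.support} c) :
    TrailThrough F p {a, b, c} := by
  obtain ⟨z, hz, w, hw, Z, W, hF⟩ := h
  have attach {z : G.V} (Z : G.Walk c z)
      (hz : (z ∈ B₁.support ∨ z ∈ B₂.support) ∨ z ∈ C₁.support ∨ z ∈ C₂.support)
      (hF : A₁.edgeMultiset + A₂.edgeMultiset + B₁.edgeMultiset + B₂.edgeMultiset +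
        C₁.edgeMultiset + C₂.edgeMultiset + Z.edgeMultiset ≤ F.val) :
      TrailThrough F p {a, b, c} := by
    obtain (hz | hz) | hz | hz := hz
    · exact .of_theta_of_mem (A₁ := A₁) (B₂ := B₂) (C₁ := C₁) (C₂ := C₂) (Z := Z) hz
        (by grind (gen := 20) (ematch := 20))
    · exact .of_theta_of_mem (A₁ := A₂) (B₂ := B₁) (C₁ := C₂) (C₂ := C₁) (Z := Z) hz
        (by grind (gen := 20) (ematch := 20))
    · rw [Set.insert_comm]
      exact .of_theta_of_mem (A₁ := A₁) (B₂ := C₂) (C₁ := B₁) (C₂ := B₂) (Z := Z) hz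
        (by grind (gen := 20) (ematch := 20))
    · rw [Set.insert_comm]
      exact .of_theta_of_mem (A₁ := A₂) (B₂ := C₁) (C₁ := B₂) (C₂ := B₁) (Z := Z) hz
        (by grind (gen := 20) (ematch := 20))
  obtain hz | hz := hz
  · obtain hw | hw := hw
    · obtain hz | hz := hz <;> obtain hw | hw := hw
      · exact .of_theta_of_mem_of_mem (A₁ := A₁) (B₁ := B₁) (B₂ := B₂) (C₁ := C₁)
          (C₂ := C₂) (Z := Z) (W := W) hz hw (by grind (gen := 20) (ematch := 20))
      · exact .of_theta_of_mem_of_mem' (A₁ := A₁) (A₂ := A₂) (B₁ := B₁) (B₂ := B₂)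
          (C₁ := C₁) (Z := Z) (W := W) hz hw (by grind (gen := 20) (ematch := 20))
      · exact .of_theta_of_mem_of_mem' (A₁ := A₁) (A₂ := A₂) (B₁ := B₁) (B₂ := B₂)
          (C₁ := C₁) (Z := W) (W := Z) hw hz (by grind (gen := 20) (ematch := 20))
      · exact .of_theta_of_mem_of_mem (A₁ := A₂) (B₁ := B₂) (B₂ := B₁) (C₁ := C₂)
          (C₂ := C₁) (Z := Z) (W := W) hz hw (by grind (gen := 20) (ematch := 20))
    · exact attach W hw (by grind (gen := 20) (ematch := 20))
  · exact attach Z hz (by grind (gen := 20) (ematch := 20))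

end Theta

theorem TwoEdgeConnOn.trailThrough_of_closed_trail (hC : G.TwoEdgeConnOn S F) (hp : p ∈ S)
    (hc : c ∈ S) {U₁ : G.Walk p a} {U₂ : G.Walk a b} {U₃ : G.Walk b p}
    (hF : U₁.edgeMultiset + U₂.edgeMultiset + U₃.edgeMultiset ≤ F.val) :
    TrailThrough F p {a, b, c} :=
  .of_closed_trail (U₁ := U₁) (U₂ := U₂) (U₃ := U₃) <| hC.hasEars hF
    (by grind [mem_edgeMultiset, mem_support_of_mem_edges]) hp (.inl U₁.start_mem_support) hc

theorem TwoEdgeConnOn.trailThrough_of_theta (hC : G.TwoEdgeConnOn S F) (hp : p ∈ S) (hc : c ∈ S)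
    {T₁ T₂ : G.Walk a p} {Z : G.Walk b z} {W : G.Walk b w} (hz : z ∈ T₁.support)
    (hw : w ∈ T₂.support)
    (hF : T₁.edgeMultiset + T₂.edgeMultiset + Z.edgeMultiset + W.edgeMultiset ≤ F.val) :
    TrailThrough F p {a, b, c} := by
  obtain ⟨B₁, A₁, rfl⟩ := T₁.exists_append_of_mem_support hz
  obtain ⟨B₂, A₂, rfl⟩ := T₂.exists_append_of_mem_support hw
  exact .of_theta (A₁ := A₁.reverse) (A₂ := A₂.reverse) (B₁ := B₁) (B₂ := B₂) (C₁ := Z) (C₂ := W) <|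
    hC.hasEars (by grind (gen := 20) (ematch := 20))
      (by grind [mem_edgeMultiset, mem_support_of_mem_edges]) hp
      (.inl (.inl A₁.reverse.start_mem_support)) hc

theorem TwoEdgeConnOn.trailThrough (hC : G.TwoEdgeConnOn S F) (hp : p ∈ S) (ha : a ∈ S)
    (hb : b ∈ S) (hc : c ∈ S) : TrailThrough F p {a, b, c} := by
  obtain ⟨_, rfl, _, rfl, T₁, T₂, hT⟩ :=
    hC.hasEars (X := 0) (W := {p}) zero_le (by simp) hp rfl ha
  rw [zero_add] at hT
  obtain ⟨z, hz, w, hw, Z, W, hF⟩ := hC.hasEars (W := {t | t ∈ T₁.support ∨ t ∈ T₂.support}) hT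
    (by grind [mem_edgeMultiset, mem_support_of_mem_edges]) hp (.inl T₁.end_mem_support) hb
  obtain hz | hz := hz <;> obtain hw | hw := hw
  · obtain ⟨V₁, V₂, hV⟩ := exists_detour hz hw (Z := Z) (W := W)
    simp only [Multiset.le_iff_count, Multiset.count_add] at hV
    exact hC.trailThrough_of_closed_trail hp hc (U₁ := T₂.reverse) (U₂ := V₁) (U₃ := V₂)
      (by grind (gen := 20) (ematch := 20))
  · exact hC.trailThrough_of_theta hp hc hz hw hF
  · exact hC.trailThrough_of_theta hp hc hw hz (Z := W) (W := Z)
      (by grind (gen := 20) (ematch := 20))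
  · obtain ⟨V₁, V₂, hV⟩ := exists_detour hz hw (Z := Z) (W := W)
    simp only [Multiset.le_iff_count, Multiset.count_add] at hV
    exact hC.trailThrough_of_closed_trail hp hc (U₁ := T₁.reverse) (U₂ := V₁) (U₃ := V₂)
      (by grind (gen := 20) (ematch := 20))

theorem Walk.exists_append_of_subset_support (T : G.Walk u v) (hA : A.Nonempty)
    (hT : ∀ a ∈ A, a ∈ T.support) :
    ∃ a ∈ A, ∃ (q : G.Walk u a) (r : G.Walk a v), T = q.append r ∧
      ∀ x ∈ A.erase a, x ∈ r.support := by
  obtain ⟨b, hb⟩ := hA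
  obtain ⟨a, ha, q, r, hqr, -, hr⟩ := T.exists_first_hit (X := A) ⟨b, hb, hT b hb⟩
  exact ⟨a, ha, q, r, hqr, fun x hx =>
    hr x (Finset.mem_of_mem_erase hx) (hT x (Finset.mem_of_mem_erase hx))⟩

theorem TwoEdgeConnOn.exists_tour (hC : G.TwoEdgeConnOn S F) (hp : p ∈ S) (hA : A ⊆ S)
    (hA3 : 3 ≤ A.card) :
    ∃ a ∈ A, ∃ b ∈ A, ∃ c ∈ A, [a, b, c].Nodup ∧
      ∃ (T₁ : G.Walk p a) (T₂ : G.Walk a b) (T₃ : G.Walk b c),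
        T₁.edgeMultiset + T₂.edgeMultiset + T₃.edgeMultiset ≤ F.val := by
  obtain ⟨B, hBA, hB3⟩ := Finset.exists_subset_card_eq hA3
  obtain ⟨w, T, hTF, hT⟩ : TrailThrough F p B := by
    obtain ⟨x, y, z, -, -, -, rfl⟩ := Finset.card_eq_three.1 hB3
    simp only [Finset.insert_subset_iff, Finset.singleton_subset_iff] at hBA
    simpa using hC.trailThrough hp (hA hBA.1) (hA hBA.2.1) (hA hBA.2.2)
  obtain ⟨a, ha, T₁, T, rfl, hTa⟩ := T.exists_append_of_subset_support
    (Finset.card_pos.1 (hB3 ▸ three_pos)) hT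
  have hBa : (B.erase a).card = 2 := by rw [Finset.card_erase_of_mem ha, hB3]
  obtain ⟨b, hb, T₂, T, rfl, hTb⟩ := T.exists_append_of_subset_support
    (Finset.card_pos.1 (hBa ▸ two_pos)) hTa
  have hBab : ((B.erase a).erase b).card = 1 := by rw [Finset.card_erase_of_mem hb, hBa]
  obtain ⟨c, hc, T₃, T, rfl, -⟩ := T.exists_append_of_subset_support
    (Finset.card_pos.1 (hBab ▸ one_pos)) hTb
  exact ⟨a, hBA ha, b, by grind, c, by grind, by grind, T₁, T₂, T₃,
    by grind (gen := 20) (ematch := 20)⟩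

end Tours

/-! ### Attaching a vertex to a trail -/

section Attachments

variable {G : Multigraph} {S A : Finset G.V} {F : Finset G.E} {p x a₁ a₂ a₃ a₄ : G.V}

/-- A trail in `F` through four vertices of `A` which visits `p` strictly between the second and
the third of them. -/
structure MidAttachment (F : Finset G.E) (A : Finset G.V) (p : G.V) where
  (a₁ a₂ a₃ a₄ : G.V)
  mem : ∀ a ∈ [a₁, a₂, a₃, a₄], a ∈ A
  nodup : [a₁, a₂, a₃, a₄].Nodup
  ne₂ : p ≠ a₂
  ne₃ : p ≠ a₃
  D₁ : G.Walk a₁ a₂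
  D₂ : G.Walk a₂ p
  D₃ : G.Walk p a₃
  D₄ : G.Walk a₃ a₄
  le : D₁.edgeMultiset + D₂.edgeMultiset + D₃.edgeMultiset + D₄.edgeMultiset ≤ F.val

/-- A trail in `F` through four vertices of `A`, with `p` joined by the trail `D₀` to a vertex `q`
lying between the first and the second of them; possibly `q = a₁`. -/
structure EndAttachment (F : Finset G.E) (A : Finset G.V) (p : G.V) where
  (a₁ a₂ a₃ a₄ q : G.V)
  mem : ∀ a ∈ [a₁, a₂, a₃, a₄], a ∈ A
  nodup : [a₁, a₂, a₃, a₄].Nodup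
  ne₂ : q ≠ a₂
  ne₃ : q ≠ a₃
  D₀ : G.Walk p q
  D₁ : G.Walk a₁ q
  D₂ : G.Walk q a₂
  D₃ : G.Walk a₂ a₃
  D₄ : G.Walk a₃ a₄
  le : D₀.edgeMultiset + D₁.edgeMultiset + D₂.edgeMultiset + D₃.edgeMultiset + D₄.edgeMultiset ≤
    F.val

theorem nonempty_endAttachment_of_mem_support {T₁ : G.Walk a₁ a₂} {T₂ : G.Walk a₂ a₃}
    {T₃ : G.Walk a₃ a₄} {Z : G.Walk p x} (hmem : ∀ a ∈ [a₁, a₂, a₃, a₄], a ∈ A)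
    (hnd : [a₁, a₂, a₃, a₄].Nodup) (hx₁ : x ∈ T₁.support) (hx₂ : x ∉ T₂.support)
    (hF : T₁.edgeMultiset + T₂.edgeMultiset + T₃.edgeMultiset + Z.edgeMultiset ≤ F.val) :
    Nonempty (EndAttachment F A p) := by
  obtain ⟨U₁, U₂, rfl⟩ := T₁.exists_append_of_mem_support hx₁
  exact ⟨{ a₁, a₂, a₃, a₄, q := x, mem := hmem, nodup := hnd
           ne₂ := by grind, ne₃ := by grind
           D₀ := Z, D₁ := U₁, D₂ := U₂, D₃ := T₂, D₄ := T₃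
           le := by grind (gen := 20) (ematch := 20) }⟩

theorem nonempty_attachment_of_hasEars {T₁ : G.Walk a₁ a₂} {T₂ : G.Walk a₂ a₃} {T₃ : G.Walk a₃ a₄}
    (hmem : ∀ a ∈ [a₁, a₂, a₃, a₄], a ∈ A) (hnd : [a₁, a₂, a₃, a₄].Nodup) (hp : p ∉ A)
    (h : HasEars F (T₁.edgeMultiset + T₂.edgeMultiset + T₃.edgeMultiset)
      {t | t ∈ T₂.support ∨ t ∈ T₁.support ∨ t ∈ T₃.support} p) :
    Nonempty (MidAttachment F A p) ∨ Nonempty (EndAttachment F A p) := by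
  obtain ⟨x, hx, y, hy, Z, W, hF⟩ := h
  have attach {x : G.V} (Z : G.Walk p x) (hx : x ∈ T₁.support ∨ x ∈ T₃.support)
      (hx₂ : x ∉ T₂.support)
      (hF : T₁.edgeMultiset + T₂.edgeMultiset + T₃.edgeMultiset + Z.edgeMultiset ≤ F.val) :
      Nonempty (EndAttachment F A p) := by
    obtain hx | hx := hx
    · exact nonempty_endAttachment_of_mem_support hmem hnd hx hx₂ hF
    · exact nonempty_endAttachment_of_mem_support (T₁ := T₃.reverse) (T₂ := T₂.reverse)
        (T₃ := T₁.reverse) (Z := Z) (by grind) (by grind) (by simpa using hx) (by simpa using hx₂)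
        (by grind (gen := 20) (ematch := 20))
  by_cases hx₂ : x ∈ T₂.support
  · by_cases hy₂ : y ∈ T₂.support
    · obtain ⟨V₁, V₂, hV⟩ := exists_detour hx₂ hy₂ (Z := Z) (W := W)
      simp only [Multiset.le_iff_count, Multiset.count_add] at hV
      exact .inl ⟨{ a₁, a₂, a₃, a₄, mem := hmem, nodup := hnd
                    ne₂ := by grind, ne₃ := by grind
                    D₁ := T₁, D₂ := V₁, D₃ := V₂, D₄ := T₃
                    le := by grind (gen := 20) (ematch := 20) }⟩
    · exact .inr (attach W (hy.resolve_left hy₂) hy₂ (by grind (gen := 20) (ematch := 20)))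
  · exact .inr (attach Z (hx.resolve_left hx₂) hx₂ (by grind (gen := 20) (ematch := 20)))

theorem TwoEdgeConnOn.nonempty_attachment (hC : G.TwoEdgeConnOn S F) (hp : p ∈ S) (hA : A ⊆ S)
    (hA4 : 4 ≤ A.card) : Nonempty (MidAttachment F A p) ∨ Nonempty (EndAttachment F A p) := by
  have tour {a : G.V} (ha : a ∈ A) := hC.exists_tour (hA ha) ((A.erase_subset a).trans hA)
    (by rw [Finset.card_erase_of_mem ha]; omega)
  by_cases hpA : p ∈ A
  · obtain ⟨b, hb, c, hc, d, hd, hnd, T₁, T₂, T₃, hT⟩ := tour hpA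
    exact .inr ⟨{ a₁ := p, a₂ := b, a₃ := c, a₄ := d, q := p, mem := by grind, nodup := by grind
                  ne₂ := by grind, ne₃ := by grind
                  D₀ := .nil p, D₁ := .nil p, D₂ := T₁, D₃ := T₂, D₄ := T₃
                  le := by grind (gen := 20) (ematch := 20) }⟩
  · obtain ⟨a, ha⟩ := Finset.card_pos.1 (four_pos.trans_le hA4)
    obtain ⟨b, hb, c, hc, d, hd, hnd, T₁, T₂, T₃, hT⟩ := tour ha
    exact nonempty_attachment_of_hasEars (T₁ := T₁) (T₂ := T₂) (T₃ := T₃) (by grind) (by grind) hpA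
      (hC.hasEars hT (by grind [mem_edgeMultiset, mem_support_of_mem_edges]) (hA ha)
        (.inr (.inl T₁.start_mem_support)) hp)

end Attachments

/-! ### A link avoiding the hub -/

section Links

variable {G : Multigraph} {S₁ S₂ : Finset G.V} {F₁ F₂ : Finset G.E} {v x y : G.V}

theorem exists_walk_avoiding (hv : ¬ G.IsCutVertex v) (hx : x ≠ v) (hy : y ≠ v) :
    ∃ p : G.Walk x y, ∀ e ∈ p.edges, v ∉ G.ends e := by
  classical
  by_contra hxy
  let Reach (z : G.V) : Prop := ∃ p : G.Walk x z, ∀ e ∈ p.edges, v ∉ G.ends e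
  refine hv ⟨Finset.univ.filter fun z => z ≠ v ∧ Reach z,
    Finset.univ.filter fun z => z ≠ v ∧ ¬ Reach z, ⟨x, ?_⟩, ⟨y, ?_⟩, ?_, by simp, by simp, ?_, ?_⟩
  · exact Finset.mem_filter.2 ⟨Finset.mem_univ x, hx, .nil x, by simp [edges]⟩
  · exact Finset.mem_filter.2 ⟨Finset.mem_univ y, hy, hxy⟩
  · exact Finset.disjoint_left.2 fun z => by simp_all
  · intro z
    simp only [Finset.mem_union, Finset.mem_filter, Finset.mem_univ, true_and]
    tauto
  · rintro e ⟨u, hu, w, hw, he⟩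
    simp only [Finset.mem_filter, Finset.mem_univ, true_and] at hu hw
    obtain ⟨huv, p, hp⟩ := hu
    refine hw.2 ⟨p.append (single e he), fun f hf => ?_⟩
    rw [← mem_edgeMultiset, edgeMultiset_append, Multiset.mem_add] at hf
    obtain hf | hf := hf
    · exact hp f hf
    · rw [Multiset.mem_singleton.1 hf, he]
      simp [huv.symm, hw.1.symm]

theorem exists_link (hv : ¬ G.IsCutVertex v) (hF₁ : ∀ e ∈ F₁, ∀ x ∈ G.ends e, x ∈ S₁)
    (hF₂ : ∀ e ∈ F₂, ∀ x ∈ G.ends e, x ∈ S₂) (hv₁ : v ∉ S₁) (hv₂ : v ∉ S₂) (hx : x ∈ S₁)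
    (hy : y ∈ S₂) :
    ∃ p₁ ∈ S₁, ∃ p₂ ∈ S₂, ∃ Q : G.Walk p₁ p₂, Q.edgeMultiset.Nodup ∧
      ∀ e ∈ Q.edgeMultiset, v ∉ G.ends e ∧ e ∉ F₁ ∧ e ∉ F₂ := by
  obtain ⟨p, hpv⟩ := exists_walk_avoiding hv (ne_of_mem_of_not_mem hx hv₁)
    (ne_of_mem_of_not_mem hy hv₂)
  obtain ⟨p', hp', hpp'⟩ := p.exists_isPath
  obtain ⟨p₂, hp₂, q, q', rfl, hq, -⟩ :=
    p'.exists_first_hit (X := S₂) ⟨y, hy, p'.end_mem_support⟩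
  obtain ⟨p₁, hp₁, r, r', hr', hr, -⟩ :=
    q.reverse.exists_first_hit (X := S₁) ⟨x, hx, q.reverse.end_mem_support⟩
  have hrq : r.edgeMultiset ≤ q.edgeMultiset := by
    rw [← q.edgeMultiset_reverse, hr', edgeMultiset_append]
    exact Multiset.le_add_right _ _
  have hrp : r.edgeMultiset ≤ (q.append q').edgeMultiset := by
    rw [edgeMultiset_append]
    exact hrq.trans (Multiset.le_add_right _ _)
  refine ⟨p₁, hp₁, p₂, hp₂, r.reverse, ?_⟩
  rw [edgeMultiset_reverse]
  refine ⟨Multiset.nodup_of_le hrp hp'.nodup_edges, fun e he => ⟨?_, fun heF => ?_, fun heF => ?_⟩⟩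
  · exact hpv e (hpp' e (Multiset.mem_of_le hrp he))
  · obtain ⟨z, hze, hz⟩ := hr e he
    exact hz (hF₁ e heF z hze)
  · obtain ⟨z, hze, hz⟩ := hq e (Multiset.mem_of_le hrq he)
    exact hz (hF₂ e heF z hze)

end Links

/-! ### Immersions from edge-disjoint walks -/

section Immersions

theorem immerses_of_walks {H G : Multigraph} {f : H.V → G.V} (hf : f.Injective) {s t : H.E → G.V}
    (W : ∀ e, G.Walk (s e) (t e)) (hW : ∀ e, s(s e, t e) = (H.ends e).map f)
    (hnd : (∑ e, (W e).edgeMultiset).Nodup) : Immerses H G := by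
  choose P hP hPW using fun e => (W e).exists_isPath
  refine ⟨⟨f, hf, s, t, P, hW, hP, fun e e' hee' => ?_⟩⟩
  have hle : (W e).edgeMultiset + (W e').edgeMultiset ≤ ∑ e, (W e).edgeMultiset := by
    rw [← Finset.sum_pair (f := fun e => (W e).edgeMultiset) hee']
    exact Finset.sum_le_sum_of_subset (Finset.subset_univ _)
  have hdisj := (Multiset.nodup_add.1 (Multiset.nodup_of_le hle hnd)).2.2
  exact fun x hx hx' => Multiset.disjoint_left.1 hdisj (hPW e x hx) (hPW e' x hx')

theorem immerses_K33_of_walks {G : Multigraph} {l₀ l₁ l₂ r₀ r₁ r₂ : G.V}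
    (hlr : [l₀, l₁, l₂, r₀, r₁, r₂].Nodup)
    (W₀₀ : G.Walk l₀ r₀) (W₀₁ : G.Walk l₀ r₁) (W₀₂ : G.Walk l₀ r₂)
    (W₁₀ : G.Walk l₁ r₀) (W₁₁ : G.Walk l₁ r₁) (W₁₂ : G.Walk l₁ r₂)
    (W₂₀ : G.Walk l₂ r₀) (W₂₁ : G.Walk l₂ r₁) (W₂₂ : G.Walk l₂ r₂)
    (hW : (W₀₀.edgeMultiset + W₀₁.edgeMultiset + W₀₂.edgeMultiset +
      (W₁₀.edgeMultiset + W₁₁.edgeMultiset + W₁₂.edgeMultiset) +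
      (W₂₀.edgeMultiset + W₂₁.edgeMultiset + W₂₂.edgeMultiset)).Nodup) :
    Immerses K33 G := by
  let l : Fin 3 → G.V := ![l₀, l₁, l₂]
  let r : Fin 3 → G.V := ![r₀, r₁, r₂]
  let W : ∀ e : Fin 3 × Fin 3, G.Walk (l e.1) (r e.2)
    | (0, 0) => W₀₀ | (0, 1) => W₀₁ | (0, 2) => W₀₂
    | (1, 0) => W₁₀ | (1, 1) => W₁₁ | (1, 2) => W₁₂
    | (2, 0) => W₂₀ | (2, 1) => W₂₁ | (2, 2) => W₂₂
  have hinj : (Sum.elim l r).Injective := by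
    rintro (i | i) (j | j) hij <;> fin_cases i <;> fin_cases j <;> simp_all [l, r]
  refine immerses_of_walks (H := K33) hinj W (fun e => rfl) ?_
  change (∑ e : Fin 3 × Fin 3, (W e).edgeMultiset).Nodup
  rwa [Fintype.sum_prod_type, Fin.sum_univ_three, Fin.sum_univ_three, Fin.sum_univ_three,
    Fin.sum_univ_three]

variable {G : Multigraph} {S₁ S₂ A₁ : Finset G.V} {F₁ F₂ : Finset G.E} {v p p₂ b₁ b₂ b₃ : G.V}
  {Q : G.Walk p p₂} {E₁ : G.Walk p₂ b₁} {E₂ : G.Walk b₁ b₂} {E₃ : G.Walk b₂ b₃} {g : G.V → G.E}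

theorem disjoint_val_of_ends_mem (hF₁ : ∀ e ∈ F₁, ∀ x ∈ G.ends e, x ∈ S₁)
    (hF₂ : ∀ e ∈ F₂, ∀ x ∈ G.ends e, x ∈ S₂) (hS : Disjoint S₁ S₂) : Disjoint F₁.val F₂.val := by
  refine Finset.disjoint_val.2 (Finset.disjoint_left.2 fun e he₁ he₂ => ?_)
  have hx := (G.ends e).out_fst_mem
  exact Finset.disjoint_left.1 hS (hF₁ e he₁ _ hx) (hF₂ e he₂ _ hx)

theorem nodup_map_of_ends_eq {l : List G.V} (hl : l.Nodup)
    (hg : ∀ x ∈ l, G.ends (g x) = s(v, x)) : (l.map g).Nodup := by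
  refine .of_map G.ends ?_
  rw [List.map_map, List.map_congr_left (f := G.ends ∘ g) (g := fun x => s(v, x)) hg]
  exact hl.map fun _ _ => Sym2.congr_right.1

theorem nodup_add_map_of_ends_eq {D E Q : Multiset G.E} {l : List G.V}
    (hF₁ : ∀ e ∈ F₁, ∀ x ∈ G.ends e, x ∈ S₁) (hF₂ : ∀ e ∈ F₂, ∀ x ∈ G.ends e, x ∈ S₂)
    (hS : Disjoint S₁ S₂) (hv₁ : v ∉ S₁) (hv₂ : v ∉ S₂) (hD : D ≤ F₁.val) (hE : E ≤ F₂.val)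
    (hQ : Q.Nodup) (hQv : ∀ e ∈ Q, v ∉ G.ends e ∧ e ∉ F₁ ∧ e ∉ F₂) (hl : l.Nodup)
    (hg : ∀ x ∈ l, G.ends (g x) = s(v, x)) : (D + E + Q + (l.map g : List G.E)).Nodup := by
  have hDF {e : G.E} (he : e ∈ D) : e ∈ F₁ := Multiset.mem_of_le hD he
  have hEF {e : G.E} (he : e ∈ E) : e ∈ F₂ := Multiset.mem_of_le hE he
  have hDE : (D + E).Nodup := Multiset.nodup_add.2 ⟨Multiset.nodup_of_le hD F₁.nodup,
    Multiset.nodup_of_le hE F₂.nodup, (disjoint_val_of_ends_mem hF₁ hF₂ hS).mono hD hE⟩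
  have hDEQ : (D + E + Q).Nodup := by
    refine Multiset.nodup_add.2 ⟨hDE, hQ, Multiset.disjoint_left.2 fun {e} he heQ => ?_⟩
    exact (Multiset.mem_add.1 he).elim (fun h => (hQv e heQ).2.1 (hDF h))
      fun h => (hQv e heQ).2.2 (hEF h)
  refine Multiset.nodup_add.2
    ⟨hDEQ, nodup_map_of_ends_eq hl hg, Multiset.disjoint_left.2 fun {e} he hel => ?_⟩
  have hve : v ∈ G.ends e := by
    obtain ⟨x, hx, rfl⟩ := List.mem_map.1 hel
    simp [hg x hx]
  obtain (he | he) | he := by simpa only [Multiset.mem_add] using he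
  · exact hv₁ (hF₁ e (hDF he) v hve)
  · exact hv₂ (hF₂ e (hEF he) v hve)
  · exact (hQv e he).1 hve

theorem nodup_branch {x y z b c : G.V} (hS : Disjoint S₁ S₂) (hv₁ : v ∉ S₁) (hv₂ : v ∉ S₂)
    (hx : x ∈ S₁) (hy : y ∈ S₁) (hz : z ∈ S₁) (hb : b ∈ S₂) (hc : c ∈ S₂)
    (hxyz : [x, y, z].Nodup) (hbc : b ≠ c) : [v, x, b, y, z, c].Nodup := by
  have hSS := Finset.disjoint_left.1 hS
  grind (splits := 30)

theorem EndAttachment.q_mem (M : EndAttachment F₁ A₁ p)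
    (hF₁ : ∀ e ∈ F₁, ∀ x ∈ G.ends e, x ∈ S₁) (hp : p ∈ S₁) : M.q ∈ S₁ := by
  refine M.D₀.end_mem hF₁ hp fun e he => Multiset.mem_of_le M.le ?_
  simp only [Multiset.mem_add, mem_edgeMultiset, he, true_or]

theorem MidAttachment.immerses_K33 (M : MidAttachment F₁ A₁ p) (hS : Disjoint S₁ S₂) (hv₁ : v ∉ S₁)
    (hv₂ : v ∉ S₂) (hA₁ : A₁ ⊆ S₁) (hp : p ∈ S₁) (hb₁ : b₁ ∈ S₂) (hb₂ : b₂ ∈ S₂) (hb : b₁ ≠ b₂)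
    (hg : ∀ x ∈ [M.a₁, M.a₂, M.a₃, M.a₄] ++ [b₁, b₂, b₃], G.ends (g x) = s(v, x))
    (hnd : (M.D₁.edgeMultiset + M.D₂.edgeMultiset + M.D₃.edgeMultiset + M.D₄.edgeMultiset +
      (E₁.edgeMultiset + E₂.edgeMultiset + E₃.edgeMultiset) + Q.edgeMultiset +
      (([M.a₁, M.a₂, M.a₃, M.a₄] ++ [b₁, b₂, b₃]).map g : List G.E)).Nodup) : Immerses K33 G := by
  have hM : [p, M.a₂, M.a₃].Nodup := by
    have := M.nodup
    grind [M.ne₂, M.ne₃]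
  simp only [List.cons_append, List.nil_append, List.forall_mem_cons] at hg
  obtain ⟨h₁, h₂, h₃, h₄, k₁, k₂, k₃, -⟩ := hg
  refine immerses_K33_of_walks (nodup_branch hS hv₁ hv₂ hp (hA₁ (M.mem M.a₂ (by simp)))
      (hA₁ (M.mem M.a₃ (by simp))) hb₂ hb₁ hM hb.symm)
    (single _ h₂) (single _ h₃) (single _ k₁)
    M.D₂.reverse M.D₃ (Q.append E₁)
    ((single _ k₂).reverse.append ((single _ h₁).append M.D₁))
      (E₃.append ((single _ k₃).reverse.append ((single _ h₄).append M.D₄.reverse))) E₂.reverse ?_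
  convert hnd using 1
  simp only [edgeMultiset_append, edgeMultiset_reverse, edgeMultiset_single, List.cons_append,
    List.nil_append, List.map_cons, List.map_nil, ← Multiset.cons_coe, Multiset.coe_nil,
    ← Multiset.singleton_add]
  abel

theorem EndAttachment.immerses_K33 (M : EndAttachment F₁ A₁ p) (hS : Disjoint S₁ S₂) (hv₁ : v ∉ S₁)
    (hv₂ : v ∉ S₂) (hA₁ : A₁ ⊆ S₁) (hq : M.q ∈ S₁) (hb₁ : b₁ ∈ S₂) (hb₂ : b₂ ∈ S₂) (hb : b₁ ≠ b₂)
    (hg : ∀ x ∈ [M.a₁, M.a₂, M.a₃, M.a₄] ++ [b₁, b₂, b₃], G.ends (g x) = s(v, x))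
    (hnd : (M.D₀.edgeMultiset + M.D₁.edgeMultiset + M.D₂.edgeMultiset + M.D₃.edgeMultiset +
      M.D₄.edgeMultiset + (E₁.edgeMultiset + E₂.edgeMultiset + E₃.edgeMultiset) + Q.edgeMultiset +
      (([M.a₁, M.a₂, M.a₃, M.a₄] ++ [b₁, b₂, b₃]).map g : List G.E)).Nodup) : Immerses K33 G := by
  have hM : [M.a₂, M.a₃, M.q].Nodup := by
    have := M.nodup
    grind [M.ne₂, M.ne₃]
  simp only [List.cons_append, List.nil_append, List.forall_mem_cons] at hg
  obtain ⟨h₁, h₂, h₃, h₄, k₁, k₂, k₃, -⟩ := hg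
  refine immerses_K33_of_walks (nodup_branch hS hv₁ hv₂ (hA₁ (M.mem M.a₂ (by simp)))
      (hA₁ (M.mem M.a₃ (by simp))) hq hb₁ hb₂ hM hb)
    (single _ h₃) ((single _ h₁).append M.D₁) (single _ k₂)
    M.D₃ M.D₂.reverse ((single _ h₂).reverse.append ((single _ k₃).append E₃.reverse))
    ((single _ k₁).reverse.append ((single _ h₄).append M.D₄.reverse))
      (E₁.reverse.append (Q.reverse.append M.D₀)) E₂ ?_
  convert hnd using 1
  simp only [edgeMultiset_append, edgeMultiset_reverse, edgeMultiset_single, List.cons_append,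
    List.nil_append, List.map_cons, List.map_nil, ← Multiset.cons_coe, Multiset.coe_nil,
    ← Multiset.singleton_add]
  abel

end Immersions

end Multigraph

open Multigraph in
theorem k33_of_two_blocks_general {G : Multigraph} {S₁ S₂ A₁ A₂ : Finset G.V}
    {F₁ F₂ : Finset G.E} {v : G.V} (hv : ¬ G.IsCutVertex v) (hC₁ : G.TwoEdgeConnOn S₁ F₁)
    (hC₂ : G.TwoEdgeConnOn S₂ F₂) (hS : Disjoint S₁ S₂) (hv₁ : v ∉ S₁) (hv₂ : v ∉ S₂)
    (hA₁ : A₁ ⊆ S₁) (hA₂ : A₂ ⊆ S₂) (hcard₁ : 4 ≤ A₁.card) (hcard₂ : 3 ≤ A₂.card)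
    (hvA : ∀ x ∈ A₁ ∪ A₂, ∃ e, G.ends e = s(v, x)) : Immerses K33 G := by
  obtain ⟨x, hx⟩ := hC₁.1
  obtain ⟨y, hy⟩ := hC₂.1
  obtain ⟨p, hp, p₂, hp₂, Q, hQ, hQv⟩ := exists_link hv hC₁.2.1 hC₂.2.1 hv₁ hv₂ hx hy
  obtain ⟨b₁, hb₁, b₂, hb₂, b₃, hb₃, hb, E₁, E₂, E₃, hE⟩ := hC₂.exists_tour hp₂ hA₂ hcard₂
  have : Nonempty G.E := ⟨(hvA b₁ (Finset.mem_union_right _ hb₁)).choose⟩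
  choose! g hg using hvA
  have spokes {l : List G.V} (hl : ∀ a ∈ l, a ∈ A₁) :
      ∀ x ∈ l ++ [b₁, b₂, b₃], G.ends (g x) = s(v, x) := fun x hx => hg x (by grind)
  have hnd {l : List G.V} (hl : l.Nodup) (hlA : ∀ a ∈ l, a ∈ A₁) {D : Multiset G.E}
      (hD : D ≤ F₁.val) : (D + (E₁.edgeMultiset + E₂.edgeMultiset + E₃.edgeMultiset) +
        Q.edgeMultiset + ((l ++ [b₁, b₂, b₃]).map g : List G.E)).Nodup :=
    nodup_add_map_of_ends_eq hC₁.2.1 hC₂.2.1 hS hv₁ hv₂ hD hE hQ hQv (List.nodup_append.2 ⟨hl, hb,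
      fun a ha b hb => Finset.disjoint_iff_ne.1 hS a (hA₁ (hlA a ha)) b (hA₂ (by grind))⟩)
      (spokes hlA)
  have hb₁₂ : b₁ ≠ b₂ := by grind
  obtain ⟨⟨M⟩⟩ | ⟨⟨M⟩⟩ := hC₁.nonempty_attachment hp hA₁ hcard₁
  · exact M.immerses_K33 hS hv₁ hv₂ hA₁ hp (hA₂ hb₁) (hA₂ hb₂) hb₁₂ (spokes M.mem)
      (hnd M.nodup M.mem M.le)
  · exact M.immerses_K33 hS hv₁ hv₂ hA₁ (M.q_mem hC₁.2.1 hp) (hA₂ hb₁) (hA₂ hb₂) hb₁₂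
      (spokes M.mem) (hnd M.nodup M.mem M.le)

open Multigraph in
/-- Let `G` be a 2-connected graph containing two vertex-disjoint
2-edge-connected subgraphs `C1 = (S1, F1)` and `C2 = (S2, F2)`, a path `P`
joining them that is edge-disjoint from both, and a vertex `v` outside
`S1 ∪ S2` joined by single edges to at least four distinct vertices of `C1`
and at least four distinct vertices of `C2`.  Then `G` contains an immersion
of `K_{3,3}`. -/
theorem k33_of_two_blocks (G : Multigraph) (h2c : G.TwoConnected)
    (S1 S2 : Finset G.V) (F1 F2 : Finset G.E)
    (hC1 : G.TwoEdgeConnOn S1 F1) (hC2 : G.TwoEdgeConnOn S2 F2)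
    (hSdisj : Disjoint S1 S2)
    (p1 p2 : G.V) (hp1 : p1 ∈ S1) (hp2 : p2 ∈ S2)
    (P : G.Walk p1 p2) (hP : P.IsPath)
    (hPdisj : ∀ e ∈ P.edges, e ∉ F1 ∧ e ∉ F2)
    (v : G.V) (hv1 : v ∉ S1) (hv2 : v ∉ S2)
    (t1 : Fin 4 → G.V) (ht1inj : Function.Injective t1)
    (ht1 : ∀ i, t1 i ∈ S1) (hm1 : ∀ i, G.mult v (t1 i) = 1)
    (g1 : Fin 4 → G.E) (hg1inj : Function.Injective g1)
    (hg1 : ∀ i, G.ends (g1 i) = s(v, t1 i))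
    (t2 : Fin 4 → G.V) (ht2inj : Function.Injective t2)
    (ht2 : ∀ i, t2 i ∈ S2) (hm2 : ∀ i, G.mult v (t2 i) = 1)
    (g2 : Fin 4 → G.E) (hg2inj : Function.Injective g2)
    (hg2 : ∀ i, G.ends (g2 i) = s(v, t2 i)) :
    Immerses K33 G :=
  k33_of_two_blocks_general (A₁ := Finset.univ.image t1) (A₂ := Finset.univ.image t2) (h2c.2.2 v)
    hC1 hC2 hSdisj hv1 hv2 (by grind) (by grind) (by simp [Finset.card_image_of_injective, *])
    (by simp [Finset.card_image_of_injective, *]) (by grind)
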